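/- Let A, B ⊆ ℝⁿ with 0 ∈ closure(A) ∩ closure(B), and let h : ℝⁿ → ℝⁿ be a bi-Lipschitz homeomorphism with h(0) = 0. Suppose that all four sets A, B, h(A), h(B) satisfy condition (SSP) at 0. Then A and B are transverse at 0 if and only if h(A) and h(B) are transverse at 0, where transversality of A and B at 0 means dim_H(LD(A)) + dim_H(LD(B)) − dim_H(LD(A) ∩ LD(B)) = n. -/

import Mathlib

/-!
Blow `h` up at the origin: the maps `x ↦ (k + 1) • h ((k + 1)⁻¹ • x)` are uniformly bi-Lipschitz,
so in a proper space they converge pointwise along any ultrafilter finer than `atTop`, and the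
limit `H` satisfies the same bi-Lipschitz bounds (`exists_blowup`).

Condition (SSP) allows a ray point `(k + 1)⁻¹ • x`, with `x ∈ LD A`, to be replaced by a point
`b k ∈ A` up to an error `o(1 / k)`. The Lipschitz bound then gives `(k + 1) • h (b k) → H x`, which
puts `H x` in `LD (h '' A)` (`blowup_mem_LD`). Hence `H` maps `LD A ∩ LD B` into
`LD (h '' A) ∩ LD (h '' B)`, and since `H` does not contract distances by more than a constant
factor, `dimH` does not decrease (`dimH_LD_inter_le`). The same inequality for `h⁻¹`, and the case
`A = B`, show that all three dimensions in the definition of transversality are preserved.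
-/

open Filter Topology Set

/-- The direction set `D(A)` of a set-germ `A` at `0`: unit vectors arising as limits of
`x_i / ‖x_i‖` for sequences `x_i ∈ A \ {0}` tending to `0`. -/
def dirSet {E : Type*} [NormedAddCommGroup E] [NormedSpace ℝ E] (A : Set E) : Set E :=
  {a | ‖a‖ = 1 ∧ ∃ x : ℕ → E, (∀ i, x i ∈ A \ {0}) ∧
    Tendsto x atTop (𝓝 0) ∧ Tendsto (fun i => (‖x i‖)⁻¹ • x i) atTop (𝓝 a)}

/-- Condition (SSP): for every sequence of nonzero points `a_m → 0` whose normalizations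
converge to a direction of `A`, there is a sequence `b_m ∈ A` with `‖a_m - b_m‖/‖a_m‖ → 0`. -/
def SSP {E : Type*} [NormedAddCommGroup E] [NormedSpace ℝ E] (A : Set E) : Prop :=
  ∀ a : ℕ → E, (∀ m, a m ≠ 0) → Tendsto a atTop (𝓝 0) →
    (∃ v ∈ dirSet A, Tendsto (fun m => (‖a m‖)⁻¹ • a m) atTop (𝓝 v)) →
    ∃ b : ℕ → E, (∀ m, b m ∈ A) ∧
      Tendsto (fun m => ‖a m - b m‖ / ‖a m‖) atTop (𝓝 0)

/-- The half-cone `L(E)` over a set of directions. -/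
def halfCone {E : Type*} [NormedAddCommGroup E] [NormedSpace ℝ E] (S : Set E) : Set E :=
  {x | ∃ a ∈ S, ∃ t : ℝ, 0 ≤ t ∧ x = t • a}

/-- The (real) tangent cone `LD(A) = L(D(A))` of `A` at `0`. -/
def LD {E : Type*} [NormedAddCommGroup E] [NormedSpace ℝ E] (A : Set E) : Set E :=
  halfCone (dirSet A)

section Blowup

variable {E : Type*} [NormedAddCommGroup E] [NormedSpace ℝ E]

/-- A direction of `C` may be witnessed along an arbitrary nontrivial filter instead of a
sequence. -/
lemma mem_dirSet_of_tendsto {ι : Type*} {l : Filter ι} [l.NeBot] {C : Set E} {z : ι → E} {a : E}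
    (ha : ‖a‖ = 1) (hz : ∀ᶠ i in l, z i ∈ C \ {0}) (hz0 : Tendsto z l (𝓝 0))
    (hza : Tendsto (fun i => (‖z i‖)⁻¹ • z i) l (𝓝 a)) : a ∈ dirSet C := by
  have key : ∀ m : ℕ, ∃ x ∈ C \ {0}, dist x 0 < 1 / ((m : ℝ) + 1) ∧
      dist ((‖x‖)⁻¹ • x) a < 1 / ((m : ℝ) + 1) := by
    intro m
    have hm : 0 < 1 / ((m : ℝ) + 1) := Nat.one_div_pos_of_nat
    obtain ⟨i, h1, h2, h3⟩ := (hz.and ((Metric.tendsto_nhds.1 hz0 _ hm).and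
      (Metric.tendsto_nhds.1 hza _ hm))).exists
    exact ⟨z i, h1, h2, h3⟩
  choose x hx hx0 hxa using key
  refine ⟨ha, x, hx, ?_, ?_⟩
  · exact tendsto_iff_dist_tendsto_zero.2 (squeeze_zero (fun _ => dist_nonneg)
      (fun m => (hx0 m).le) tendsto_one_div_add_atTop_nhds_zero_nat)
  · exact tendsto_iff_dist_tendsto_zero.2 (squeeze_zero (fun _ => dist_nonneg)
      (fun m => (hxa m).le) tendsto_one_div_add_atTop_nhds_zero_nat)

lemma tendsto_inv_succ : Tendsto (fun k : ℕ => ((k : ℝ) + 1)⁻¹) atTop (𝓝 0) := by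
  simpa [one_div] using tendsto_one_div_add_atTop_nhds_zero_nat (𝕜 := ℝ)

/-- Nonzero limits of rescaled points of `C` lie in the tangent cone of `C`. -/
lemma mem_LD_of_tendsto {l : Filter ℕ} [l.NeBot] (hl : l ≤ atTop) {C : Set E} {z : ℕ → E} {y : E}
    (hy : y ≠ 0) (hz : ∀ k, z k ∈ C)
    (hzy : Tendsto (fun k : ℕ => ((k : ℝ) + 1) • z k) l (𝓝 y)) : y ∈ LD C := by
  have hpos : ∀ k : ℕ, 0 < (k : ℝ) + 1 := fun k => by positivity
  have hny : ‖y‖ ≠ 0 := norm_ne_zero_iff.2 hy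
  refine ⟨‖y‖⁻¹ • y, mem_dirSet_of_tendsto (l := l) (z := z) ?_ ?_ ?_ ?_, ‖y‖, norm_nonneg y, ?_⟩
  · rw [norm_smul, norm_inv, norm_norm, inv_mul_cancel₀ hny]
  · filter_upwards [hzy.eventually_ne hy] with k hk
    exact ⟨hz k, fun h0 => hk (by rw [mem_singleton_iff.1 h0, smul_zero])⟩
  · have := (tendsto_inv_succ.mono_left hl).smul hzy
    rw [zero_smul] at this
    refine this.congr fun k => ?_
    rw [inv_smul_smul₀ (hpos k).ne']
  · refine ((hzy.norm.inv₀ hny).smul hzy).congr fun k => ?_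
    rw [norm_smul, Real.norm_of_nonneg (hpos k).le, smul_smul, mul_inv, mul_right_comm,
      inv_mul_cancel₀ (hpos k).ne', one_mul]
  · rw [smul_inv_smul₀ hny]

/-- Along an ultrafilter, the blow-ups of a bi-Lipschitz map fixing `0` converge pointwise to a map
that is bounded below by the same constant. -/
lemma exists_blowup [ProperSpace E] (U : Ultrafilter ℕ) {h : E → E} {L : ℝ} (h0 : h 0 = 0)
    (hbil : ∀ x y, (1 / L) * ‖x - y‖ ≤ ‖h x - h y‖ ∧ ‖h x - h y‖ ≤ L * ‖x - y‖) :
    ∃ H : E → E, (∀ x, Tendsto (fun k : ℕ => ((k : ℝ) + 1) • h (((k : ℝ) + 1)⁻¹ • x)) U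
      (𝓝 (H x))) ∧ ∀ x y, (1 / L) * ‖x - y‖ ≤ ‖H x - H y‖ := by
  have hpos : ∀ k : ℕ, 0 < (k : ℝ) + 1 := fun k => by positivity
  have hex : ∀ x, ∃ y, Tendsto (fun k : ℕ => ((k : ℝ) + 1) • h (((k : ℝ) + 1)⁻¹ • x)) U
      (𝓝 y) := by
    intro x
    have hb : ∀ k : ℕ, ((k : ℝ) + 1) • h (((k : ℝ) + 1)⁻¹ • x) ∈
        Metric.closedBall (0 : E) (L * ‖x‖) := by
      intro k
      have := (hbil (((k : ℝ) + 1)⁻¹ • x) 0).2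
      rw [h0, sub_zero, sub_zero, norm_smul, norm_inv, Real.norm_of_nonneg (hpos k).le] at this
      rw [mem_closedBall_zero_iff, norm_smul, Real.norm_of_nonneg (hpos k).le]
      calc _ ≤ ((k : ℝ) + 1) * (L * (((k : ℝ) + 1)⁻¹ * ‖x‖)) :=
            mul_le_mul_of_nonneg_left this (hpos k).le
        _ = L * ‖x‖ := by have := (hpos k).ne'; field_simp
    obtain ⟨y, -, hy⟩ := (isCompact_closedBall (0 : E) (L * ‖x‖)).ultrafilter_le_nhds
      (U.map fun k : ℕ => ((k : ℝ) + 1) • h (((k : ℝ) + 1)⁻¹ • x))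
      (le_principal_iff.2 (Filter.mem_map.2 (Filter.univ_mem' hb)))
    exact ⟨y, hy⟩
  choose H hH using hex
  refine ⟨H, hH, fun x y => ge_of_tendsto ((hH x).sub (hH y)).norm (Eventually.of_forall ?_)⟩
  intro k
  have := (hbil (((k : ℝ) + 1)⁻¹ • x) (((k : ℝ) + 1)⁻¹ • y)).1
  rw [← smul_sub, norm_smul, norm_inv, Real.norm_of_nonneg (hpos k).le] at this
  rw [← smul_sub, norm_smul, Real.norm_of_nonneg (hpos k).le]
  calc 1 / L * ‖x - y‖ = ((k : ℝ) + 1) * (1 / L * (((k : ℝ) + 1)⁻¹ * ‖x - y‖)) := by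
        have := (hpos k).ne'; field_simp
    _ ≤ _ := mul_le_mul_of_nonneg_left this (hpos k).le

/-- The blow-up `H` of `h` maps nonzero vectors of `LD A` into `LD (h '' A)`, provided it does not
kill them. -/
lemma blowup_mem_LD {l : Filter ℕ} [l.NeBot] (hl : l ≤ atTop) {h H : E → E} {L : ℝ}
    (hlip : ∀ x y, ‖h x - h y‖ ≤ L * ‖x - y‖)
    (hH : ∀ x, Tendsto (fun k : ℕ => ((k : ℝ) + 1) • h (((k : ℝ) + 1)⁻¹ • x)) l (𝓝 (H x)))
    {A : Set E} (hA : SSP A) {x : E} (hx : x ∈ LD A) (hx0 : x ≠ 0) (hHx : H x ≠ 0) :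
    H x ∈ LD (h '' A) := by
  have hpos : ∀ k : ℕ, 0 < (k : ℝ) + 1 := fun k => by positivity
  have hdir : ‖x‖⁻¹ • x ∈ dirSet A := by
    obtain ⟨a, ha, t, ht, rfl⟩ := hx
    have ht0 : t ≠ 0 := fun h => hx0 (by rw [h, zero_smul])
    rwa [norm_smul, ha.1, mul_one, Real.norm_of_nonneg ht, inv_smul_smul₀ ht0]
  obtain ⟨b, hbA, hb⟩ := hA (fun k => ((k : ℝ) + 1)⁻¹ • x)
    (fun k => smul_ne_zero (inv_ne_zero (hpos k).ne') hx0)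
    (by simpa using tendsto_inv_succ.smul_const x)
    ⟨_, hdir, tendsto_const_nhds.congr fun k => by
      rw [norm_smul, norm_inv, Real.norm_of_nonneg (hpos k).le, smul_smul, mul_inv, inv_inv,
        mul_right_comm, mul_inv_cancel₀ (hpos k).ne', one_mul]⟩
  refine mem_LD_of_tendsto hl hHx (fun k => mem_image_of_mem h (hbA k)) ?_
  -- The rescaled error is at most `L * ‖x‖` times the relative error supplied by (SSP).
  have herr : Tendsto (fun k : ℕ => ((k : ℝ) + 1) • h (b k) -
      ((k : ℝ) + 1) • h (((k : ℝ) + 1)⁻¹ • x)) l (𝓝 0) := by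
    refine squeeze_zero_norm (fun k => ?_)
      (by simpa using (hb.mono_left hl).const_mul (L * ‖x‖))
    have hxn : ‖x‖ ≠ 0 := norm_ne_zero_iff.2 hx0
    rw [← smul_sub, norm_smul, Real.norm_of_nonneg (hpos k).le, norm_sub_rev]
    calc _ ≤ ((k : ℝ) + 1) * (L * ‖((k : ℝ) + 1)⁻¹ • x - b k‖) :=
          mul_le_mul_of_nonneg_left (hlip _ _) (hpos k).le
      _ = _ := by
        rw [norm_smul, norm_inv, Real.norm_of_nonneg (hpos k).le]
        have := (hpos k).ne'
        field_simp
  simpa using herr.add (hH x)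

lemma dimH_LD_inter_le [ProperSpace E] {A B : Set E} {h : E → E} {L : ℝ} (hL : 0 < L)
    (h0 : h 0 = 0)
    (hbil : ∀ x y, (1 / L) * ‖x - y‖ ≤ ‖h x - h y‖ ∧ ‖h x - h y‖ ≤ L * ‖x - y‖)
    (hA : SSP A) (hB : SSP B) :
    dimH (LD A ∩ LD B) ≤ dimH (LD (h '' A) ∩ LD (h '' B)) := by
  have hU : ((hyperfilter ℕ : Ultrafilter ℕ) : Filter ℕ) ≤ atTop := Nat.hyperfilter_le_atTop
  obtain ⟨H, hH, hlow⟩ := exists_blowup (hyperfilter ℕ) h0 hbil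
  have hH0 : H 0 = 0 := tendsto_nhds_unique (hH 0) (by simp [h0])
  have hne : ∀ x, x ≠ 0 → H x ≠ 0 := by
    intro x hx hHx
    have := hlow x 0
    rw [hHx, hH0, sub_self, norm_zero, sub_zero] at this
    exact absurd this (not_le.2 (mul_pos (one_div_pos.2 hL) (norm_pos_iff.2 hx)))
  have hmaps : ∀ C : Set E, SSP C → ∀ x ∈ LD C, H x ∈ LD (h '' C) := by
    intro C hC x hx
    have hnz : ∀ x ∈ LD C, x ≠ 0 → H x ∈ LD (h '' C) := fun x hx hx0 =>
      blowup_mem_LD hU (fun x y => (hbil x y).2) hH hC hx hx0 (hne x hx0)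
    by_cases hx0 : x = 0
    · -- `0 ∈ LD C` only says that `C` has a direction; its image shows that `h '' C` has one too.
      obtain ⟨a, ha, -⟩ := hx
      have ha0 : a ≠ 0 := norm_ne_zero_iff.1 (by rw [ha.1]; exact one_ne_zero)
      obtain ⟨c, hc, -⟩ := hnz a ⟨a, ha, 1, zero_le_one, (one_smul ℝ a).symm⟩ ha0
      exact ⟨c, hc, 0, le_rfl, by rw [hx0, hH0, zero_smul]⟩
    · exact hnz x hx hx0
  have hanti : AntilipschitzWith L.toNNReal H := by
    refine AntilipschitzWith.of_le_mul_dist fun x y => ?_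
    have := hlow x y
    rw [one_div, inv_mul_le_iff₀ hL] at this
    rwa [dist_eq_norm, dist_eq_norm, Real.coe_toNNReal L hL.le]
  refine (hanti.le_dimH_image _).trans (dimH_mono ?_)
  rintro _ ⟨x, ⟨hxA, hxB⟩, rfl⟩
  exact ⟨hmaps A hA x hxA, hmaps B hB x hxB⟩

/-- A bi-Lipschitz bijection fixing `0` preserves the dimension of intersections of tangent cones
of sets whose images also satisfy (SSP). -/
lemma dimH_LD_inter_eq [ProperSpace E] {A B : Set E} {h : E → E} {L : ℝ} (hL : 0 < L)
    (h0 : h 0 = 0) (hsurj : Function.Surjective h)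
    (hbil : ∀ x y, (1 / L) * ‖x - y‖ ≤ ‖h x - h y‖ ∧ ‖h x - h y‖ ≤ L * ‖x - y‖)
    (hA : SSP A) (hB : SSP B) (hA' : SSP (h '' A)) (hB' : SSP (h '' B)) :
    dimH (LD A ∩ LD B) = dimH (LD (h '' A) ∩ LD (h '' B)) := by
  have hinj : Function.Injective h := by
    intro x y hxy
    have := (hbil x y).1
    rw [hxy, sub_self, norm_zero] at this
    by_contra hne
    exact absurd this (not_le.2 (mul_pos (one_div_pos.2 hL) (norm_pos_iff.2 (sub_ne_zero.2 hne))))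
  obtain ⟨g, hgl, hgr⟩ := Function.bijective_iff_has_inverse.1 ⟨hinj, hsurj⟩
  have hg0 : g 0 = 0 := by rw [← h0, hgl, h0]
  have hgbil : ∀ x y, (1 / L) * ‖x - y‖ ≤ ‖g x - g y‖ ∧ ‖g x - g y‖ ≤ L * ‖x - y‖ := by
    intro x y
    have := hbil (g x) (g y)
    rw [hgr, hgr] at this
    rw [one_div, inv_mul_le_iff₀ hL] at *
    exact ⟨this.2, this.1⟩
  refine le_antisymm (dimH_LD_inter_le hL h0 hbil hA hB) ?_
  have := dimH_LD_inter_le hL hg0 hgbil hA' hB'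
  rwa [hgl.image_image, hgl.image_image] at this

end Blowup

/-- under the (SSP) assumptions on `A`, `B`, `h(A)`, `h(B)`, a bi-Lipschitz
homeomorphism `h` of `ℝⁿ` fixing `0` preserves transversality at `0`, where `A` and `B` are
transverse at `0` iff `dim_H LD(A) + dim_H LD(B) - dim_H(LD(A) ∩ LD(B)) = n`. -/
theorem transversality_biLipschitz_invariant {n : ℕ}
    (A B : Set (EuclideanSpace ℝ (Fin n)))
    (hA : (0 : EuclideanSpace ℝ (Fin n)) ∈ closure A)
    (hB : (0 : EuclideanSpace ℝ (Fin n)) ∈ closure B)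
    (h : EuclideanSpace ℝ (Fin n) → EuclideanSpace ℝ (Fin n))
    (L : ℝ) (hL : 1 ≤ L) (h0 : h 0 = 0) (hsurj : Function.Surjective h)
    (hbil : ∀ x y, (1 / L) * ‖x - y‖ ≤ ‖h x - h y‖ ∧ ‖h x - h y‖ ≤ L * ‖x - y‖)
    (hsspA : SSP A) (hsspB : SSP B)
    (hsspA' : SSP (h '' A)) (hsspB' : SSP (h '' B)) :
    (dimH (LD A) + dimH (LD B) - dimH (LD A ∩ LD B) = n) ↔
    (dimH (LD (h '' A)) + dimH (LD (h '' B)) - dimH (LD (h '' A) ∩ LD (h '' B)) = n) := by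
  have hL0 : 0 < L := zero_lt_one.trans_le hL
  have hAA := dimH_LD_inter_eq hL0 h0 hsurj hbil hsspA hsspA hsspA' hsspA'
  have hBB := dimH_LD_inter_eq hL0 h0 hsurj hbil hsspB hsspB hsspB' hsspB'
  rw [inter_self, inter_self] at hAA hBB
  rw [hAA, hBB, dimH_LD_inter_eq hL0 h0 hsurj hbil hsspA hsspB hsspA' hsspB']
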